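/- arXiv:1507.02075 — 8 statements merged into one kernel-verified Lean document; each statement's English description precedes it below -/
import Mathlib

section
/- For every integer M ≥ 2, the function F_M(θ) = sin²(πMθ)/sin²(πθ) is strictly decreasing on the interval (0, 1/M]. -/
/-!
The ratio `D_n(x) = sin (n x) / sin x` satisfies `D_{n+1}(x) = D_n(x) cos x + cos (n x)`.
On `0 < x ≤ π / (n + 1)` with `n ≥ 1`, the factors `D_n` and `cos` are nonnegative and decreasing
and `x ↦ cos (n x)` is strictly decreasing, so by induction `D_{n+1}` is strictly decreasing there.
As `D_M ≥ 0` on `(0, π / M]`, its square is strictly decreasing as well; substituting `x = πθ`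
gives the kernel.
-/

open Real

/-- The inductive step for `D_n(x) = sin (n x) / sin x`, with denominators cleared:
`D_n(y) ≤ D_n(x)` implies `D_{n+1}(y) < D_{n+1}(x)`. -/
lemma sin_mul_sin_step (n : ℕ) (hn : 1 ≤ n) (x y : ℝ) (hx : 0 < x) (hxy : x < y)
    (hy : ((n : ℝ) + 1) * y ≤ π)
    (h : sin (n * y) * sin x ≤ sin (n * x) * sin y) :
    sin (((n : ℝ) + 1) * y) * sin x < sin (((n : ℝ) + 1) * x) * sin y := by
  have hn' : (1 : ℝ) ≤ n := by exact_mod_cast hn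
  have hy2 : y ≤ π / 2 := by nlinarith
  have hny : (n : ℝ) * y ≤ π := by linarith
  have hnxy : (n : ℝ) * x < n * y := by gcongr
  have hnx0 : 0 < (n : ℝ) * x := by positivity
  have hsx : 0 < sin x := sin_pos_of_pos_of_lt_pi hx (by linarith [pi_pos])
  have hsy : 0 < sin y := sin_pos_of_pos_of_lt_pi (by linarith) (by linarith [pi_pos])
  have hcy : 0 ≤ cos y := cos_nonneg_of_neg_pi_div_two_le_of_le (by linarith) hy2
  have hcxy : cos y ≤ cos x := (cos_lt_cos_of_nonneg_of_le_pi hx.le (by linarith) hxy).le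
  have hcn : cos (n * y) < cos (n * x) := cos_lt_cos_of_nonneg_of_le_pi hnx0.le hny hnxy
  have hsnx : 0 ≤ sin (n * x) := sin_nonneg_of_nonneg_of_le_pi hnx0.le (by linarith)
  rw [add_mul, add_mul, one_mul, one_mul, sin_add, sin_add]
  have h1 := mul_le_mul_of_nonneg_right h hcy
  have h2 := mul_le_mul_of_nonneg_left hcxy (mul_nonneg hsnx hsy.le)
  have h3 := mul_lt_mul_of_pos_right hcn (mul_pos hsx hsy)
  linarith

lemma sin_nat_mul_mul_sin_le (n : ℕ) (hn : 1 ≤ n) (x y : ℝ) (hx : 0 < x) (hxy : x < y)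
    (hy : (n : ℝ) * y ≤ π) :
    sin (n * y) * sin x ≤ sin (n * x) * sin y := by
  induction n, hn using Nat.le_induction with
  | base => simp [mul_comm]
  | succ n hn ih =>
    push_cast at hy ⊢
    exact (sin_mul_sin_step n hn x y hx hxy hy (ih (by linarith))).le

/-- For every integer `M ≥ 2`, the Fejér-type kernel
`F_M(θ) = sin²(πMθ)/sin²(πθ)` is strictly decreasing on `(0, 1/M]`. -/
theorem fejer_kernel_strictAntiOn_main_lobe
    (M : ℕ) (hM : 2 ≤ M) :
    StrictAntiOn (fun θ : ℝ => Real.sin (Real.pi * M * θ) ^ 2 / Real.sin (Real.pi * θ) ^ 2)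
      (Set.Ioc (0 : ℝ) (1 / M)) := by
  rintro a ⟨ha, -⟩ b ⟨hb, hb'⟩ hab
  obtain ⟨n, rfl⟩ : ∃ n, M = n + 1 := ⟨M - 1, by omega⟩
  have hn : 1 ≤ n := by omega
  have hn' : (1 : ℝ) ≤ n := by exact_mod_cast hn
  have hpi := pi_pos
  have hx : 0 < π * a := by positivity
  have hxy : π * a < π * b := by gcongr
  have hy : ((n : ℝ) + 1) * (π * b) ≤ π := by
    push_cast at hb'
    rw [le_div_iff₀ (by positivity)] at hb'
    nlinarith
  have key := sin_mul_sin_step n hn _ _ hx hxy hy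
    (sin_nat_mul_mul_sin_le n hn _ _ hx hxy (by linarith))
  have hy1 : π * b < π := by nlinarith
  have hsx : 0 < sin (π * a) := sin_pos_of_pos_of_lt_pi hx (by linarith)
  have hsy : 0 < sin (π * b) := sin_pos_of_pos_of_lt_pi (by linarith) hy1
  have hs : 0 ≤ sin (((n : ℝ) + 1) * (π * b)) :=
    sin_nonneg_of_nonneg_of_le_pi (by positivity) hy
  have e (t : ℝ) : π * ((n + 1 : ℕ) : ℝ) * t = ((n : ℝ) + 1) * (π * t) := by
    push_cast; ring
  simp only [e, ← div_pow]
  exact pow_lt_pow_left₀ ((div_lt_div_iff₀ hsy hsx).2 key) (div_nonneg hs hsy.le) two_ne_zero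
end

section
/- For every integer M ≥ 3 and every real θ ∈ [1/M, 2/M], one has sin²(πMθ)/sin²(πθ) < 1/sin²(π/(2M)). -/
/-!
The numerator is at most `1`, so it suffices that `sin (π / (2M)) < sin (πθ)`. Since
`π / M ≤ πθ ≤ 2π / M ≤ π - π / M` (the last step is where `M ≥ 3` enters), `πθ` lies strictly between
`π / (2M)` and `π - π / (2M)`, where the sine exceeds its common value at the two endpoints.
-/

open Real

theorem sin_lt_sin_of_lt_of_lt_pi_sub {a x : ℝ} (ha : 0 ≤ a) (hax : a < x) (hxa : x < π - a) :
    sin a < sin x := by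
  rcases le_total x (π / 2) with h | h
  · exact sin_lt_sin_of_lt_of_le_pi_div_two (by linarith [pi_pos]) h hax
  · rw [← sin_pi_sub x]
    exact sin_lt_sin_of_lt_of_le_pi_div_two (by linarith [pi_pos]) (by linarith) (by linarith)

/-- For every integer `M ≥ 3` and every `θ ∈ [1/M, 2/M]`, the first sidelobe of the
Fejér-type kernel is strictly below its main-lobe value at `θ = 1/(2M)`:
`sin²(πMθ)/sin²(πθ) < 1/sin²(π/(2M))`. -/
theorem fejer_kernel_sidelobe_lt_half_main_lobe
    (M : ℕ) (hM : 3 ≤ M) (θ : ℝ) (hθ : θ ∈ Set.Icc (1 / (M : ℝ)) (2 / (M : ℝ))) :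
    Real.sin (Real.pi * M * θ) ^ 2 / Real.sin (Real.pi * θ) ^ 2
      < 1 / Real.sin (Real.pi / (2 * M)) ^ 2 := by
  obtain ⟨h1, h2⟩ := hθ
  have hM' : (3 : ℝ) ≤ M := by exact_mod_cast hM
  have hM0 : (0 : ℝ) < M := by linarith
  have hpi := pi_pos
  have ha : π / (2 * M) = π * (1 / M) / 2 := by field_simp
  have hu : (0 : ℝ) < 1 / M := by positivity
  have hu3 : (1 : ℝ) / M ≤ 1 / 3 := one_div_le_one_div_of_le (by norm_num) hM'
  have h2' : θ ≤ 2 * (1 / M) := by rwa [mul_one_div]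
  have hpu : 0 < π * (1 / M) := by positivity
  have hpu3 : π * (1 / M) ≤ π * (1 / 3) := by gcongr
  have hl : π * (1 / M) ≤ π * θ := by gcongr
  have hr : π * θ ≤ π * (2 * (1 / M)) := by gcongr
  have hs0 : 0 < sin (π / (2 * M)) := by
    apply sin_pos_of_pos_of_lt_pi <;> rw [ha] <;> linarith
  have hs : sin (π / (2 * M)) < sin (π * θ) := by
    apply sin_lt_sin_of_lt_of_lt_pi_sub <;> rw [ha] <;> linarith
  calc sin (π * M * θ) ^ 2 / sin (π * θ) ^ 2 ≤ 1 / sin (π * θ) ^ 2 := by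
        gcongr
        exact sin_sq_le_one _
    _ < 1 / sin (π / (2 * M)) ^ 2 := by gcongr
end

section
/- Let M ≥ 3 be an integer and let k be an integer with 1 ≤ k ≤ M−2. Then there is exactly one point θ* in the open interval (k/M, (k+1)/M) at which the derivative of F_M(θ) = sin²(πMθ)/sin²(πθ) vanishes (equivalently, at which M·cos(πMθ)·sin(πθ) = cos(πθ)·sin(πMθ)), and F_M attains its maximum over the closed interval [k/M, (k+1)/M] at θ*. -/
open Real

/-!
The derivative of `F` at a point of the sidelobe is `2π sin(πMθ) h(θ) / sin³(πθ)`, where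
`h(θ) = M cos(πMθ) sin(πθ) - cos(πθ) sin(πMθ)`. Neither sine vanishes inside the sidelobe, so the
critical points of `F` there are exactly the zeros of `h`. The mixed terms cancel in
`h'(θ) = π (1 - M²) sin(πMθ) sin(πθ)`, so `h'` has no zero in the sidelobe, and by Rolle's theorem
`h` has at most one. A critical point exists because `F` is continuous on the closed interval, zero
at its endpoints and positive inside: its maximum is interior.
-/

/-- The numerator `h` whose zeros are the critical points of the kernel inside a sidelobe. -/
noncomputable def critNum (M : ℕ) (θ : ℝ) : ℝ :=
  M * cos (π * M * θ) * sin (π * θ) - cos (π * θ) * sin (π * M * θ)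

lemma hasDerivAt_sin_const_mul (c θ : ℝ) :
    HasDerivAt (fun t => sin (c * t)) (cos (c * θ) * c) θ := by
  simpa using ((hasDerivAt_id θ).const_mul c).sin

lemma hasDerivAt_cos_const_mul (c θ : ℝ) :
    HasDerivAt (fun t => cos (c * t)) (-sin (c * θ) * c) θ := by
  simpa using ((hasDerivAt_id θ).const_mul c).cos

lemma hasDerivAt_critNum (M : ℕ) (θ : ℝ) :
    HasDerivAt (critNum M) (π * (1 - (M : ℝ) ^ 2) * sin (π * M * θ) * sin (π * θ)) θ := by
  have h := (((hasDerivAt_cos_const_mul (π * M) θ).const_mul (M : ℝ)).mul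
    (hasDerivAt_sin_const_mul π θ)).sub
    ((hasDerivAt_cos_const_mul π θ).mul (hasDerivAt_sin_const_mul (π * M) θ))
  refine h.congr_deriv ?_
  ring

lemma hasDerivAt_fejer (M : ℕ) {θ : ℝ} (h0 : sin (π * θ) ≠ 0) :
    HasDerivAt (fun t => sin (π * M * t) ^ 2 / sin (π * t) ^ 2)
      (2 * π * sin (π * M * θ) * critNum M θ / sin (π * θ) ^ 3) θ := by
  have h := ((hasDerivAt_sin_const_mul (π * M) θ).pow 2).div
    ((hasDerivAt_sin_const_mul π θ).pow 2) (pow_ne_zero 2 h0)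
  refine h.congr_deriv ?_
  simp only [critNum, Pi.pow_apply]
  field_simp
  push_cast
  ring

/-- `sin (π x)` has no zero strictly between two consecutive integers. -/
lemma sin_pi_mul_ne_zero_of_between {x : ℝ} (k : ℕ) (h1 : (k : ℝ) < x) (h2 : x < k + 1) :
    sin (π * x) ≠ 0 := by
  intro h
  obtain ⟨n, hn⟩ := sin_eq_zero_iff.mp h
  have hx : (n : ℝ) = x := mul_left_cancel₀ pi_ne_zero (by rw [← hn]; ring)
  rw [← hx] at h1 h2
  have h1' : (k : ℤ) < n := by exact_mod_cast h1
  have h2' : n < (k : ℤ) + 1 := by exact_mod_cast h2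
  omega

/-- For `M ≥ 3` and `1 ≤ k ≤ M−2`, the Fejér-type kernel
`F_M(θ) = sin²(πMθ)/sin²(πθ)` has exactly one critical point `θ*` in the open sidelobe
interval `(k/M, (k+1)/M)` (equivalently, a point where
`M·cos(πMθ)·sin(πθ) = cos(πθ)·sin(πMθ)`), and `F_M` attains its maximum over the closed
interval `[k/M, (k+1)/M]` at `θ*`. -/
theorem fejer_kernel_unique_sidelobe_max
    (M : ℕ) (hM : 3 ≤ M) (k : ℕ) (hk1 : 1 ≤ k) (hk2 : k ≤ M - 2)
    (F : ℝ → ℝ)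
    (hF : ∀ θ : ℝ, F θ = Real.sin (Real.pi * M * θ) ^ 2 / Real.sin (Real.pi * θ) ^ 2) :
    ∃ θs : ℝ, θs ∈ Set.Ioo ((k : ℝ) / M) (((k : ℝ) + 1) / M) ∧
      deriv F θs = 0 ∧
      (M : ℝ) * Real.cos (Real.pi * M * θs) * Real.sin (Real.pi * θs)
        = Real.cos (Real.pi * θs) * Real.sin (Real.pi * M * θs) ∧
      (∀ θ ∈ Set.Ioo ((k : ℝ) / M) (((k : ℝ) + 1) / M), deriv F θ = 0 → θ = θs) ∧
      (∀ θ ∈ Set.Icc ((k : ℝ) / M) (((k : ℝ) + 1) / M), F θ ≤ F θs) := by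
  obtain rfl : F = fun θ => sin (π * M * θ) ^ 2 / sin (π * θ) ^ 2 := funext hF
  have hM0 : (0 : ℝ) < M := by exact_mod_cast (by omega : 0 < M)
  have hM3 : (3 : ℝ) ≤ M := by exact_mod_cast hM
  have hk : (0 : ℝ) < k := by exact_mod_cast hk1
  have hkM : (k : ℝ) + 1 < M := by exact_mod_cast (by omega : k + 1 < M)
  have hlt : (k : ℝ) / M < ((k : ℝ) + 1) / M := by gcongr; linarith
  have hsin : ∀ θ ∈ Set.Icc ((k : ℝ) / M) (((k : ℝ) + 1) / M), sin (π * θ) ≠ 0 := by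
    rintro θ ⟨h1, h2⟩
    refine sin_pi_mul_ne_zero_of_between 0 ?_ ?_
    · simpa using (div_pos hk hM0).trans_le h1
    · simpa using h2.trans_lt ((div_lt_one hM0).mpr hkM)
  have hsinM : ∀ θ ∈ Set.Ioo ((k : ℝ) / M) (((k : ℝ) + 1) / M), sin (π * M * θ) ≠ 0 := by
    rintro θ ⟨h1, h2⟩
    rw [div_lt_iff₀ hM0] at h1
    rw [lt_div_iff₀ hM0] at h2
    rw [mul_assoc]
    exact sin_pi_mul_ne_zero_of_between k (by linarith) (by linarith)
  have hcrit : ∀ θ ∈ Set.Ioo ((k : ℝ) / M) (((k : ℝ) + 1) / M),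
      deriv (fun θ => sin (π * M * θ) ^ 2 / sin (π * θ) ^ 2) θ = 0 → critNum M θ = 0 := by
    intro θ hθ h
    have hs := hsin θ (Set.Ioo_subset_Icc_self hθ)
    rw [(hasDerivAt_fejer M hs).deriv] at h
    simpa [hs, hsinM θ hθ, pi_ne_zero] using h
  have huniq : ∀ a ∈ Set.Ioo ((k : ℝ) / M) (((k : ℝ) + 1) / M),
      ∀ b ∈ Set.Ioo ((k : ℝ) / M) (((k : ℝ) + 1) / M),
      critNum M a = 0 → critNum M b = 0 → ¬ a < b := by
    intro a ha b hb h1 h2 hab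
    obtain ⟨c, hc, hc0⟩ := exists_hasDerivAt_eq_zero hab
      (fun x _ => (hasDerivAt_critNum M x).continuousAt.continuousWithinAt)
      (h1.trans h2.symm) (fun x _ => hasDerivAt_critNum M x)
    have hcI : c ∈ Set.Ioo ((k : ℝ) / M) (((k : ℝ) + 1) / M) :=
      ⟨ha.1.trans hc.1, hc.2.trans hb.2⟩
    have hM1 : (1 : ℝ) - (M : ℝ) ^ 2 ≠ 0 := by nlinarith
    exact mul_ne_zero (mul_ne_zero (mul_ne_zero pi_ne_zero hM1) (hsinM c hcI))
      (hsin c (Set.Ioo_subset_Icc_self hcI)) hc0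
  obtain ⟨θs, hθs, hmax⟩ := isCompact_Icc.exists_isMaxOn (Set.nonempty_Icc.mpr hlt.le)
    (fun θ hθ => (hasDerivAt_fejer M (hsin θ hθ)).continuousAt.continuousWithinAt)
  have hpos : 0 < sin (π * M * θs) ^ 2 / sin (π * θs) ^ 2 := by
    obtain ⟨m, hm⟩ := exists_between hlt
    have hmI : m ∈ Set.Icc ((k : ℝ) / M) (((k : ℝ) + 1) / M) := Set.Ioo_subset_Icc_self hm
    have h1 := hsinM m hm
    have h2 := hsin m hmI
    exact lt_of_lt_of_le (by positivity) (hmax hmI)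
  have hI : θs ∈ Set.Ioo ((k : ℝ) / M) (((k : ℝ) + 1) / M) := by
    refine ⟨lt_of_le_of_ne hθs.1 ?_, lt_of_le_of_ne hθs.2 ?_⟩
    · rintro rfl
      have h : π * M * ((k : ℝ) / M) = k * π := by field_simp
      simp [h, sin_nat_mul_pi] at hpos
    · rintro rfl
      have h : π * M * (((k : ℝ) + 1) / M) = ((k + 1 : ℕ) : ℝ) * π := by
        push_cast
        field_simp
      rw [h, sin_nat_mul_pi] at hpos
      simp at hpos
  have hd : deriv (fun θ => sin (π * M * θ) ^ 2 / sin (π * θ) ^ 2) θs = 0 :=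
    (hmax.isLocalMax (Icc_mem_nhds hI.1 hI.2)).deriv_eq_zero
  have h0 := hcrit θs hI hd
  refine ⟨θs, hI, hd, sub_eq_zero.mp h0, fun θ hθ h => ?_, fun θ hθ => hmax hθ⟩
  have hc := hcrit θ hθ h
  exact le_antisymm (not_lt.mp (huniq θs hI θ hθ h0 hc)) (not_lt.mp (huniq θ hθ θs hI hc h0))
end

section
/- Let M ≥ 2 be an integer and let α < 0 be a real number. Define, for β < 0, h(β) = [(1 − e^{2β})/(1 − e^{2βM})] · [(1 − e^{(α+β)M})/(1 − e^{(α+β)})]². Then h is strictly increasing on (−∞, α) and strictly decreasing on (α, 0); in particular, h attains its unique global maximum over (−∞, 0) at β = α. -/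
/-!
With `S(u) = ∑_{k < M} e^{ku}`, the geometric sum formula turns the objective into
`h(β) = S(α + β)² / S(2β)`, so that `log h(β) = 2 K(α + β) - K(2β)` where `K = log ∘ S`.

`K` is strictly convex (`strictConvexOn_logGeom`): at every `u` the line whose slope is the mean
`m` of the index `k` under the weights `e^{ku}` lies strictly below the graph of `K`, because
`e^x ≥ 1 + x`, strictly unless `x = 0` (`exists_support_line`).

For `x < y`, `log h(y) - log h(x)` equals `2(y - x)` times the secant slope of `K` over
`[α + x, α + y]` minus its secant slope over `[2x, 2y]`. If `y ≤ α`, the first interval lies to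
the right of the second, and if `α ≤ x` it lies to the left; since secant slopes of a strictly
convex function strictly increase as the interval moves right (`secant_lt_secant`), `h` is strictly
increasing up to and including `α` and strictly decreasing from `α` on, which also gives the
unique maximum.
-/

/-- The geometric sum `∑_{k < M} e^{ku}` in the exponential variable. -/
noncomputable def expGeom (M : ℕ) (u : ℝ) : ℝ := ∑ k ∈ Finset.range M, Real.exp (k * u)

/-- The logarithm of the geometric sum: the cumulant generating function, up to an additive
constant, of the uniform distribution on `{0, …, M - 1}`. -/
noncomputable def logGeom (M : ℕ) (u : ℝ) : ℝ := Real.log (expGeom M u)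

lemma expGeom_pos {M : ℕ} (hM : 2 ≤ M) (u : ℝ) : 0 < expGeom M u :=
  Finset.sum_pos (fun _ _ => Real.exp_pos _) ⟨0, Finset.mem_range.2 (by omega)⟩

lemma expGeom_eq (M : ℕ) {u : ℝ} (hu : u < 0) :
    expGeom M u = (1 - Real.exp (u * M)) / (1 - Real.exp u) := by
  have h1 : Real.exp u < 1 := Real.exp_lt_one_iff.2 hu
  have h2 : expGeom M u = ∑ k ∈ Finset.range M, Real.exp u ^ k :=
    Finset.sum_congr rfl fun k _ => Real.exp_nat_mul u k
  rw [h2, geom_sum_eq h1.ne, mul_comm u, Real.exp_nat_mul, ← neg_div_neg_eq, neg_sub, neg_sub]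

/-- The graph of `logGeom M` has a strict supporting line at every point. -/
lemma exists_support_line {M : ℕ} (hM : 2 ≤ M) (u : ℝ) :
    ∃ m : ℝ, ∀ v, v ≠ u → logGeom M u + m * (v - u) < logGeom M v := by
  have hS := expGeom_pos hM u
  set m : ℝ := (∑ k ∈ Finset.range M, (k : ℝ) * Real.exp (k * u)) / expGeom M u with hm
  have hmean : ∑ k ∈ Finset.range M, ((k : ℝ) - m) * Real.exp (k * u) = 0 := by
    simp only [sub_mul, Finset.sum_sub_distrib, ← Finset.mul_sum]
    change _ - m * expGeom M u = 0
    rw [hm, div_mul_cancel₀ _ hS.ne', sub_self]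
  refine ⟨m, fun v hv => ?_⟩
  have hd : v - u ≠ 0 := sub_ne_zero.2 hv
  have key : expGeom M u <
      ∑ k ∈ Finset.range M, Real.exp (k * u) * Real.exp (((k : ℝ) - m) * (v - u)) := by
    have h0 : expGeom M u = ∑ k ∈ Finset.range M,
        Real.exp (k * u) * (((k : ℝ) - m) * (v - u) + 1) := by
      have : ∀ k ∈ Finset.range M, Real.exp (k * u) * (((k : ℝ) - m) * (v - u) + 1) =
          (v - u) * (((k : ℝ) - m) * Real.exp (k * u)) + Real.exp (k * u) := fun k _ => by ring
      rw [Finset.sum_congr rfl this, Finset.sum_add_distrib, ← Finset.mul_sum, hmean, mul_zero,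
        zero_add]
      rfl
    rw [h0]
    apply Finset.sum_lt_sum
    · exact fun k _ =>
        mul_le_mul_of_nonneg_left (Real.add_one_le_exp _) (Real.exp_pos _).le
    · -- `M ≥ 2` provides an index different from the mean: `0`, or `1` if the mean is `0`.
      obtain ⟨k, hk, hkm⟩ : ∃ k ∈ Finset.range M, (k : ℝ) - m ≠ 0 := by
        by_cases h : m = 0
        · exact ⟨1, Finset.mem_range.2 (by omega), by simp [h]⟩
        · exact ⟨0, Finset.mem_range.2 (by omega), by simpa using h⟩
      exact ⟨k, hk, mul_lt_mul_of_pos_left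
        (Real.add_one_lt_exp (mul_ne_zero hkm hd)) (Real.exp_pos _)⟩
  have hv' : expGeom M v = Real.exp (m * (v - u)) *
      ∑ k ∈ Finset.range M, Real.exp (k * u) * Real.exp (((k : ℝ) - m) * (v - u)) := by
    rw [expGeom, Finset.mul_sum]
    refine Finset.sum_congr rfl fun k _ => ?_
    rw [← Real.exp_add, ← Real.exp_add]
    congr 1
    ring
  rw [logGeom, logGeom, hv', Real.log_mul (Real.exp_pos _).ne' (hS.trans key).ne', Real.log_exp]
  linarith [Real.log_lt_log hS key]

lemma strictConvexOn_logGeom {M : ℕ} (hM : 2 ≤ M) :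
    StrictConvexOn ℝ Set.univ (logGeom M) := by
  refine ⟨convex_univ, fun u _ v _ huv a b ha hb hab => ?_⟩
  simp only [smul_eq_mul]
  obtain ⟨m, hm⟩ := exists_support_line hM (a * u + b * v)
  obtain rfl : b = 1 - a := by linarith
  have hu := hm u fun h => huv <| sub_eq_zero.1 <|
    (mul_eq_zero.1 (show (1 - a) * (u - v) = 0 by linarith)).resolve_left hb.ne'
  have hv := hm v fun h => huv <| sub_eq_zero.1 <|
    (mul_eq_zero.1 (show a * (u - v) = 0 by linarith)).resolve_left ha.ne'
  nlinarith [mul_lt_mul_of_pos_left hu ha, mul_lt_mul_of_pos_left hv hb]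

/-- Secant slopes of a strictly convex function strictly increase when the interval moves right.
The two intervals may overlap. -/
lemma secant_lt_secant {f : ℝ → ℝ} (hf : StrictConvexOn ℝ Set.univ f) {p q r s : ℝ}
    (hpq : p < q) (hrs : r < s) (hpr : p ≤ r) (hqs : q ≤ s) (hne : p < r ∨ q < s) :
    (f q - f p) / (q - p) < (f s - f r) / (s - r) := by
  have hps : p < s := hpq.trans_le hqs
  have flip : ∀ x y : ℝ, (f x - f y) / (x - y) = (f y - f x) / (y - x) := fun x y => by
    rw [← neg_div_neg_eq, neg_sub, neg_sub]
  have h1 : q < s → (f q - f p) / (q - p) < (f s - f p) / (s - p) := fun h =>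
    hf.secant_strict_mono trivial trivial trivial hpq.ne' hps.ne' h
  have h2 : p < r → (f s - f p) / (s - p) < (f s - f r) / (s - r) := fun h => by
    rw [flip s p, flip s r]
    exact hf.secant_strict_mono trivial trivial trivial hps.ne hrs.ne h
  rcases hpr.eq_or_lt with rfl | hpr
  · exact h1 (hne.resolve_left (lt_irrefl _))
  · rcases hqs.eq_or_lt with rfl | hqs
    · exact h2 hpr
    · exact (h1 hqs).trans (h2 hpr)

/-- Unimodality of the damping-factor correlation objective: for `M ≥ 2` and `α < 0`,
`h(β) = [(1 − e^{2β})/(1 − e^{2βM})]·[(1 − e^{(α+β)M})/(1 − e^{(α+β)})]²` is strictly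
increasing on `(−∞, α)`, strictly decreasing on `(α, 0)`, and attains its unique global
maximum over `(−∞, 0)` at `β = α`. -/
theorem damping_objective_unimodal
    (M : ℕ) (hM : 2 ≤ M) (α : ℝ) (hα : α < 0)
    (h : ℝ → ℝ)
    (hh : ∀ β : ℝ, h β =
      ((1 - Real.exp (2 * β)) / (1 - Real.exp (2 * β * M))) *
        ((1 - Real.exp ((α + β) * M)) / (1 - Real.exp (α + β))) ^ 2) :
    StrictMonoOn h (Set.Iio α) ∧
    StrictAntiOn h (Set.Ioo α 0) ∧
    (∀ β : ℝ, β < 0 → β ≠ α → h β < h α) := by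
  have hexp : ∀ β < 0, h β = Real.exp (2 * logGeom M (α + β) - logGeom M (2 * β)) := by
    intro β hβ
    have e1 := expGeom_eq M (show α + β < 0 by linarith)
    have e2 := expGeom_eq M (show 2 * β < 0 by linarith)
    rw [hh, ← e1, ← inv_div, ← e2, Real.exp_sub, two_mul (logGeom M (α + β)), Real.exp_add, logGeom, logGeom,
      Real.exp_log (expGeom_pos hM _), Real.exp_log (expGeom_pos hM _)]
    ring
  have hK := strictConvexOn_logGeom hM
  have inc : ∀ x y, x < y → y ≤ α → h x < h y := by
    intro x y hxy hy
    rw [hexp x (by linarith), hexp y (by linarith), Real.exp_lt_exp]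
    have := secant_lt_secant hK (p := 2 * x) (q := 2 * y) (r := α + x) (s := α + y)
      (by linarith) (by linarith) (by linarith) (by linarith) (Or.inl (by linarith))
    rw [div_lt_div_iff₀ (by linarith) (by linarith)] at this
    have hpos : 0 < y - x := sub_pos.2 hxy
    by_contra! hcon
    nlinarith [mul_le_mul_of_nonneg_left hcon hpos.le]
  have dec : ∀ x y, x < y → α ≤ x → y < 0 → h y < h x := by
    intro x y hxy hx hy
    rw [hexp x (by linarith), hexp y hy, Real.exp_lt_exp]
    have := secant_lt_secant hK (p := α + x) (q := α + y) (r := 2 * x) (s := 2 * y)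
      (by linarith) (by linarith) (by linarith) (by linarith) (Or.inr (by linarith))
    rw [div_lt_div_iff₀ (by linarith) (by linarith)] at this
    have hpos : 0 < y - x := sub_pos.2 hxy
    by_contra! hcon
    nlinarith [mul_le_mul_of_nonneg_left hcon hpos.le]
  refine ⟨fun x _ y hy hxy => inc x y hxy (le_of_lt hy),
    fun x hx y hy hxy => dec x y hxy hx.1.le hy.2, fun β hβ hne => ?_⟩
  rcases hne.lt_or_gt with hlt | hgt
  · exact inc β α hlt le_rfl
  · exact dec α β hgt le_rfl hβ
end

section
/- Let M ≥ 2 and F ≥ 1 be integers, let a_1, …, a_F ∈ ℂ, and let A ∈ ℂ^{M×F} be the Vandermonde matrix with entries A_{m,f} = a_f^{m−1} (m = 1,…,M, f = 1,…,F). Suppose A = U·T with U ∈ ℂ^{M×F} and T ∈ ℂ^{F×F} invertible. Denote by Ū (resp. U̲) the matrix obtained from U by deleting its last (resp. first) row, and suppose Ū has full column rank, with Moore–Penrose pseudo-inverse Ū† (so Ū†Ū = I_F). Then (Ū† U̲)·T = T·diag(a_1, …, a_F); in particular, for each f, the f-th column of T is an eigenvector of Ū†U̲ with eigenvalue a_f.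 -/
/-!
Multiplying each column of a Vandermonde matrix by its generator shifts it up by one row, so
`A̲ = Ā * diagonal a`. Deleting a row of `A = U * T` only affects the left factor, which turns this
into `U̲ * T = Ū * T * diagonal a`; a left inverse of `Ū` then cancels `Ū`.
-/

open Matrix

/-- ESPRIT-type shift invariance (Section V.A of the paper). Let `A` be the `(n+1) × F`
Vandermonde matrix (`n ≥ 1`, so the number of rows is `M = n+1 ≥ 2`) with columns generated
by `a 1, …, a F`, suppose `A = U·T` with `T` invertible, let `Ubar` (resp. `Ulow`) be `U`
with its last (resp. first) row deleted, and let `Udag` be a left inverse of `Ubar`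
(e.g. its Moore–Penrose pseudo-inverse when `Ubar` has full column rank). Then
`(Udag·Ulow)·T = T·diag(a)`; in particular each column of `T` is an eigenvector of
`Udag·Ulow` with eigenvalue the corresponding `a f`. -/
theorem esprit_shift_invariance
    (n F : ℕ) (hn : 1 ≤ n) (hF : 1 ≤ F)
    (a : Fin F → ℂ)
    (A U : Matrix (Fin (n + 1)) (Fin F) ℂ) (T : Matrix (Fin F) (Fin F) ℂ)
    (hA : ∀ (m : Fin (n + 1)) (f : Fin F), A m f = a f ^ (m : ℕ))
    (hAUT : A = U * T) (hT : IsUnit T)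
    (Ubar Ulow : Matrix (Fin n) (Fin F) ℂ)
    (hUbar : ∀ (i : Fin n) (f : Fin F), Ubar i f = U i.castSucc f)
    (hUlow : ∀ (i : Fin n) (f : Fin F), Ulow i f = U i.succ f)
    (Udag : Matrix (Fin F) (Fin n) ℂ)
    (hUdag : Udag * Ubar = 1) :
    (Udag * Ulow) * T = T * Matrix.diagonal a ∧
    ∀ f : Fin F, (Udag * Ulow).mulVec (fun i => T i f) = a f • (fun i => T i f) := by
  -- Row `i` of `U̲ T` is row `i + 1` of `A`, i.e. row `i` scaled entrywise by the generators.
  have hshift : Ulow * T = Ubar * T * Matrix.diagonal a := by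
    have hlow : ∀ i f, (Ulow * T) i f = A i.succ f := fun i f => by
      simp only [hAUT, Matrix.mul_apply, hUlow]
    have hbar : ∀ i f, (Ubar * T) i f = A i.castSucc f := fun i f => by
      simp only [hAUT, Matrix.mul_apply, hUbar]
    ext i f
    rw [Matrix.mul_diagonal, hlow, hbar, hA, hA, Fin.val_succ, Fin.val_castSucc, pow_succ]
  have hmain : (Udag * Ulow) * T = T * Matrix.diagonal a := by
    rw [Matrix.mul_assoc, hshift, ← Matrix.mul_assoc, ← Matrix.mul_assoc, hUdag, Matrix.one_mul]
  refine ⟨hmain, fun f => ?_⟩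
  ext i
  -- The eigenvector equation is column `f` of the matrix identity.
  have h := congrFun (congrFun hmain i) f
  rw [Matrix.mul_diagonal, mul_comm] at h
  exact h
end

section
/- Let E be a normed complex vector space, let F ≥ 1 be an integer, let ỹ ∈ E, let H ⊆ E be a subset, and for each f ∈ {1,…,F} and each integer i ≥ 0 let ŷ_f^{(i)} ∈ H. Define residuals by R_F^{(0)} = ỹ − Σ_{f=1}^F ŷ_f^{(0)}, and for i ≥ 1: R_0^{(i)} = R_F^{(i−1)} and R_f^{(i)} = R_{f−1}^{(i)} + ŷ_f^{(i−1)} − ŷ_f^{(i)} for f = 1,…,F. Assume that for every i ≥ 1 and every f, ‖ŷ_f^{(i−1)} + R_{f−1}^{(i)} − ŷ_f^{(i)}‖ ≤ ‖ŷ_f^{(i−1)} + R_{f−1}^{(i)} − X‖ for all X ∈ H. Then for every i ≥ 1, ‖ỹ − Σ_{f=1}^F ŷ_f^{(i)}‖ ≤ ‖ỹ − Σ_{f=1}^F ŷ_f^{(i−1)}‖. -/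
/-!
Within a sweep, the residual equals the initial residual plus the sum of the changes made so far,
so telescoping over the sweep and inducting on `i` gives `R i F = ytil - ∑ f, yhat i f`.
The previous estimate `yhat (i - 1) f` is itself a competitor in the minimization defining
`yhat i f`, and its error is exactly `R i (f - 1)`; hence no single update increases the norm of
the residual, and neither does a full sweep from `R i 0 = R (i - 1) F` to `R i F`.
-/

/-- Theorem 4 of the paper: the iterative refinement stage of the MTSM algorithm never
increases the approximation residual, i.e.
`‖ỹ − Σ_f ŷ_f^{(i)}‖ ≤ ‖ỹ − Σ_f ŷ_f^{(i−1)}‖` for every `i ≥ 1`. -/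
theorem mtsm_residual_decrease
    {E : Type*} [NormedAddCommGroup E] [NormedSpace ℂ E]
    (F : ℕ) (hF : 1 ≤ F)
    (H : Set E)
    (ytil : E) (yhat : ℕ → ℕ → E) (R : ℕ → ℕ → E)
    (hmem : ∀ i : ℕ, ∀ f : ℕ, 1 ≤ f → f ≤ F → yhat i f ∈ H)
    (hR0 : R 0 F = ytil - ∑ f ∈ Finset.Icc 1 F, yhat 0 f)
    (hRinit : ∀ i : ℕ, 1 ≤ i → R i 0 = R (i - 1) F)
    (hRstep : ∀ i : ℕ, 1 ≤ i → ∀ f : ℕ, 1 ≤ f → f ≤ F →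
      R i f = R i (f - 1) + yhat (i - 1) f - yhat i f)
    (hmin : ∀ i : ℕ, 1 ≤ i → ∀ f : ℕ, 1 ≤ f → f ≤ F → ∀ X ∈ H,
      ‖yhat (i - 1) f + R i (f - 1) - yhat i f‖ ≤ ‖yhat (i - 1) f + R i (f - 1) - X‖) :
    ∀ i : ℕ, 1 ≤ i →
      ‖ytil - ∑ f ∈ Finset.Icc 1 F, yhat i f‖ ≤ ‖ytil - ∑ f ∈ Finset.Icc 1 F, yhat (i - 1) f‖ := by
  -- The residual along a sweep, written out as a telescoped sum.
  have tele : ∀ i, 1 ≤ i → ∀ n, n ≤ F →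
      R i n = R i 0 + ∑ f ∈ Finset.Icc 1 n, yhat (i - 1) f - ∑ f ∈ Finset.Icc 1 n, yhat i f := by
    intro i hi n
    induction n with
    | zero => simp
    | succ k ih =>
      intro hk
      rw [hRstep i hi (k + 1) (by omega) hk, Nat.add_sub_cancel, ih (by omega),
        Finset.sum_Icc_succ_top (by omega), Finset.sum_Icc_succ_top (by omega)]
      abel
  have closed : ∀ i, R i F = ytil - ∑ f ∈ Finset.Icc 1 F, yhat i f := by
    intro i
    induction i with
    | zero => exact hR0
    | succ k ih =>
      rw [tele (k + 1) (by omega) F le_rfl, hRinit (k + 1) (by omega), Nat.add_sub_cancel, ih]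
      abel
  have mono : ∀ i, 1 ≤ i → ∀ n, n ≤ F → ‖R i n‖ ≤ ‖R i 0‖ := by
    intro i hi n
    induction n with
    | zero => exact fun _ => le_rfl
    | succ k ih =>
      intro hk
      refine le_trans ?_ (ih (by omega))
      -- The old estimate is an admissible competitor, with error `R i k`.
      have h := hmin i hi (k + 1) (by omega) hk _ (hmem (i - 1) (k + 1) (by omega) hk)
      rw [Nat.add_sub_cancel, add_sub_cancel_left] at h
      rwa [hRstep i hi (k + 1) (by omega) hk, Nat.add_sub_cancel, add_comm (R i k)]
  intro i hi
  rw [← closed i, ← closed (i - 1), ← hRinit i hi]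
  exact mono i hi F le_rfl
end

section
/- Let R ≥ 1 be an integer, let M > 0 be a real number, let q ∈ ℝ^R, and let d ∈ ℝ^R with d_n > 0 for all n. Let B ∈ ℝ^{(R+1)×(R+1)} be the symmetric block matrix B = M·[[q qᵀ + diag(d), q], [qᵀ, 1]]. Then B is invertible, (B^{−1})_{n,n} = 1/(M·d_n) for every n ∈ {1,…,R}, and (B^{−1})_{R+1,R+1} = (1 + Σ_{n=1}^R q_n²/d_n)/M. -/
/-!
Completing the square, `fromBlocks (q qᵀ + D) q qᵀ 1 = U * fromBlocks D 0 0 1 * Uᵀ` with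
`D = diagonal d` and `U = fromBlocks 1 q 0 1`. Since the Schur complement of the corner `1` is just
`D`, inverting the factors gives the inverse `fromBlocks D⁻¹ (-D⁻¹q) (-qᵀD⁻¹) (1 + qᵀD⁻¹q)`. The
theorem verifies this candidate, scaled by `M⁻¹`, as a right inverse and reads off its diagonal.
-/

open Matrix

/-- Inversion of the bordered matrix appearing in the single-mode CRLB computation
(Section VI.B of the paper): for `B = M·[[q qᵀ + diag d, q], [qᵀ, 1]]` with `M > 0` and
`d_n > 0`, `B` is invertible, `(B⁻¹)_{n,n} = 1/(M d_n)` for `n ≤ R`, and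
`(B⁻¹)_{R+1,R+1} = (1 + Σ_n q_n²/d_n)/M`. -/
theorem crlb_bordered_matrix_inverse
    (R : ℕ) (hR : 1 ≤ R) (M : ℝ) (hM : 0 < M)
    (q d : Fin R → ℝ) (hd : ∀ n, 0 < d n)
    (B : Matrix (Fin R ⊕ Unit) (Fin R ⊕ Unit) ℝ)
    (hB : B = M • Matrix.fromBlocks
        (Matrix.vecMulVec q q + Matrix.diagonal d)
        (Matrix.of fun n (_ : Unit) => q n)
        (Matrix.of fun (_ : Unit) k => q k)
        (Matrix.of fun (_ : Unit) (_ : Unit) => (1 : ℝ))) :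
    IsUnit B ∧
    (∀ n : Fin R, B⁻¹ (Sum.inl n) (Sum.inl n) = 1 / (M * d n)) ∧
    B⁻¹ (Sum.inr ()) (Sum.inr ()) = (1 + ∑ n, q n ^ 2 / d n) / M := by
  have hd0 : ∀ n, d n ≠ 0 := fun n => (hd n).ne'
  have hM0 : M ≠ 0 := hM.ne'
  have hBC : B * (M⁻¹ • Matrix.fromBlocks
      (Matrix.diagonal fun n => (d n)⁻¹)
      (Matrix.of fun n (_ : Unit) => -(q n / d n))
      (Matrix.of fun (_ : Unit) k => -(q k / d k))
      (Matrix.of fun (_ : Unit) (_ : Unit) => 1 + ∑ n, q n ^ 2 / d n)) = 1 := by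
    rw [hB, Matrix.smul_mul, Matrix.mul_smul, smul_smul, mul_inv_cancel₀ hM0, one_smul,
      Matrix.fromBlocks_multiply, ← Matrix.fromBlocks_one]
    congr 1
    · ext n k
      by_cases h : n = k
      · subst h
        simp [Matrix.mul_apply, Matrix.vecMulVec_apply, Matrix.diagonal_apply, add_mul, hd0]
        ring
      · simp [Matrix.mul_apply, Matrix.vecMulVec_apply, Matrix.diagonal_apply, h, add_mul]
        ring
    · ext n u
      have h1 : ∑ j, q n * q j * (q j / d j) = q n * ∑ j, q j ^ 2 / d j := by
        rw [Finset.mul_sum]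
        exact Finset.sum_congr rfl fun j _ => by ring
      have h2 : d n * (q n / d n) = q n := mul_div_cancel₀ _ (hd0 n)
      simp [Matrix.mul_apply, Matrix.vecMulVec_apply, Matrix.diagonal_apply, add_mul,
        Finset.sum_add_distrib, h1, h2]
      ring
    · ext u k
      simp [Matrix.mul_apply, Matrix.diagonal_apply, div_eq_mul_inv]
    · ext u v
      have h1 : ∑ j, q j * (q j / d j) = ∑ j, q j ^ 2 / d j :=
        Finset.sum_congr rfl fun j _ => by ring
      simp [Matrix.mul_apply, h1]
  refine ⟨IsUnit.of_mul_eq_one _ hBC, ?_, ?_⟩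
  · intro n
    rw [Matrix.inv_eq_right_inv hBC]
    simp [mul_comm]
  · rw [Matrix.inv_eq_right_inv hBC]
    simp [div_eq_inv_mul]
end

section
/- For every integer M ≥ 2, the limit as x → 1 from the left of (1 − x)²(1 − x^M)² / (x(1 − x^M)² − M² x^M (1 − x)²) equals 12/(M² − 1). -/
open Filter

/-!
Put `h = 1 - x` and expand `x ^ M` around `x = 1` to third order in `h`, with a continuous
remainder (`pow_expansion`). Then `1 - x ^ M = h q` with `q → M`, so the numerator is `h ^ 4 q ^ 2`.
In the denominator the terms of order `h ^ 2` and `h ^ 3` cancel, and it equals `h ^ 4 D` with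
`D → M ^ 2 (M ^ 2 - 1) / 12`. Cancelling `h ^ 4` gives the limit `M ^ 2 / (M ^ 2 (M ^ 2 - 1) / 12)`.
-/

/-- Third-order Taylor expansion of `x ^ M` at `1` in powers of `1 - x`, with a continuous
fourth-order coefficient. -/
lemma pow_expansion (M : ℕ) : ∃ r : ℝ → ℝ, Continuous r ∧ ∀ x : ℝ,
    x ^ M = 1 - M * (1 - x) + (M * (M - 1) / 2 : ℝ) * (1 - x) ^ 2
      - (M * (M - 1) * (M - 2) / 6 : ℝ) * (1 - x) ^ 3 + r x * (1 - x) ^ 4 := by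
  induction M with
  | zero => exact ⟨fun _ => 0, continuous_const, fun x => by simp⟩
  | succ n ih =>
    obtain ⟨r, hr, h⟩ := ih
    refine ⟨fun x => r x * x + (n * (n - 1) * (n - 2) / 6 : ℝ), by fun_prop, fun x => ?_⟩
    rw [pow_succ, h x]
    push_cast
    ring

/-- Limit behind equation (47) of the paper (undamped limit of the single-mode
frequency CRLB): as `x → 1⁻`,
`(1 − x)²(1 − x^M)² / (x(1 − x^M)² − M² x^M (1 − x)²) → 12/(M² − 1)` for `M ≥ 2`. -/
theorem crlb_undamped_frequency_limit
    (M : ℕ) (hM : 2 ≤ M) :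
    Filter.Tendsto
      (fun x : ℝ =>
        (1 - x) ^ 2 * (1 - x ^ M) ^ 2 /
          (x * (1 - x ^ M) ^ 2 - (M : ℝ) ^ 2 * x ^ M * (1 - x) ^ 2))
      (nhdsWithin 1 (Set.Iio 1))
      (nhds (12 / ((M : ℝ) ^ 2 - 1))) := by
  obtain ⟨r, hr, hx⟩ := pow_expansion M
  have ha : (2 : ℝ) ≤ M := by exact_mod_cast hM
  generalize (M : ℝ) = a at *
  have ha1 : a ^ 2 - 1 ≠ 0 := by nlinarith
  have ha0 : a ≠ 0 := by linarith
  obtain ⟨b, hb⟩ : ∃ b, b = a * (a - 1) / 2 := ⟨_, rfl⟩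
  obtain ⟨c, hc⟩ : ∃ c, c = a * (a - 1) * (a - 2) / 6 := ⟨_, rfl⟩
  rw [← hb, ← hc] at hx
  let q : ℝ → ℝ := fun x => a - b * (1 - x) + c * (1 - x) ^ 2 - r x * (1 - x) ^ 3
  -- `s` collects the terms of `q ^ 2` of order at least `(1 - x) ^ 3`.
  let s : ℝ → ℝ := fun x => -2 * b * c - 2 * a * r x + (1 - x) * (c ^ 2 + 2 * b * r x)
    - 2 * c * r x * (1 - x) ^ 2 + r x ^ 2 * (1 - x) ^ 3
  let D : ℝ → ℝ := fun x => b ^ 2 + 2 * a * c + 2 * a * b - a ^ 2 * b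
    + (1 - x) * (s x - b ^ 2 - 2 * a * c + a ^ 2 * c) - (1 - x) ^ 2 * (s x + a ^ 2 * r x)
  have hD1 : D 1 = a ^ 2 * (a ^ 2 - 1) / 12 := by
    simp only [D, hb, hc]
    ring
  have hD0 : D 1 ≠ 0 := by
    rw [hD1]
    positivity
  have hlim : Tendsto (fun x => q x ^ 2 / D x) (nhdsWithin 1 (Set.Iio 1))
      (nhds (12 / (a ^ 2 - 1))) := by
    have hcont : ContinuousAt (fun x => q x ^ 2 / D x) 1 := by
      refine ContinuousAt.div ?_ ?_ hD0
      · exact Continuous.continuousAt (by fun_prop)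
      · exact Continuous.continuousAt (by fun_prop)
    have hval : q 1 ^ 2 / D 1 = 12 / (a ^ 2 - 1) := by
      have hq1 : q 1 = a := by simp [q]
      rw [hD1, hq1]
      field_simp
    rw [← hval]
    exact hcont.tendsto.mono_left nhdsWithin_le_nhds
  refine hlim.congr' ?_
  filter_upwards [self_mem_nhdsWithin] with x hx1
  have hh : (1 - x) ^ 4 ≠ 0 := pow_ne_zero _ (sub_ne_zero.mpr (ne_of_gt hx1))
  have hnum : (1 - x) ^ 2 * (1 - x ^ M) ^ 2 = (1 - x) ^ 4 * q x ^ 2 := by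
    rw [hx x]
    simp only [q]
    ring
  have hden : x * (1 - x ^ M) ^ 2 - a ^ 2 * x ^ M * (1 - x) ^ 2 = (1 - x) ^ 4 * D x := by
    -- The cancellation of the cubic terms.
    have hab : a ^ 3 - a ^ 2 - 2 * a * b = 0 := by
      rw [hb]
      ring
    rw [hx x]
    simp only [D, s]
    linear_combination (1 - x) ^ 3 * hab
  rw [hnum, hden, mul_div_mul_left _ _ hh]
end
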